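/- If H is a 5-uniform hypergraph on n vertices with no isolated vertices, then γ_g(H) ≤ (37/72)·n. -/

import Mathlib

attribute [local instance 10] Classical.propDecidable

variable {V : Type}

/-- The closed neighborhood of a vertex in a hypergraph given by its edge set. -/
noncomputable def closedNbhd [Fintype V] (H : Finset (Finset V)) (v : V) : Finset V :=
  Finset.univ.filter (fun u => u = v ∨ ∃ e ∈ H, u ∈ e ∧ v ∈ e)

private lemma card_sdiff_union_lt [Fintype V] {S T : Finset V} (h : ¬ T ⊆ S) :
    (Finset.univ \ (S ∪ T)).card < (Finset.univ \ S).card := by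
  classical
  obtain ⟨u, huT, huS⟩ := Finset.not_subset.mp h
  apply Finset.card_lt_card
  rw [Finset.ssubset_def]
  constructor
  · exact Finset.sdiff_subset_sdiff (Finset.Subset.refl _) Finset.subset_union_left
  · intro hc
    have hu : u ∈ Finset.univ \ S := by simp [huS]
    have := hc hu
    simp [huT] at this

/-- Value of the domination game on a hypergraph: `S` is the set of vertices already
dominated, `dom = true` iff Dominator is the next player to move.  A legal move is a vertex
dominating at least one new vertex; Dominator minimizes, Staller maximizes the total
number of moves, and both play optimally. -/
noncomputable def domGameVal [Fintype V] (H : Finset (Finset V)) (dom : Bool) (S : Finset V) :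
    ℕ :=
  if h : (Finset.univ.filter fun v => ¬ closedNbhd H v ⊆ S).Nonempty then
    1 + (if dom then
        (Finset.univ.filter fun v => ¬ closedNbhd H v ⊆ S).attach.inf'
          (Finset.attach_nonempty_iff.mpr h)
          (fun v => domGameVal H false (S ∪ closedNbhd H v.1))
      else
        (Finset.univ.filter fun v => ¬ closedNbhd H v ⊆ S).attach.sup'
          (Finset.attach_nonempty_iff.mpr h)
          (fun v => domGameVal H true (S ∪ closedNbhd H v.1)))
  else 0
termination_by (Finset.univ \ S).card
decreasing_by
  · exact card_sdiff_union_lt (Finset.mem_filter.mp v.2).2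
  · exact card_sdiff_union_lt (Finset.mem_filter.mp v.2).2

/-- The game domination number (Dominator starts). -/
noncomputable def gammaGame [Fintype V] (H : Finset (Finset V)) : ℕ :=
  domGameVal H true ∅

/-!
Dominator plays greedily. A position `S` is given the potential
`a * (number of undominated vertices) + b * (number of legal moves)`. If Dominator's move dominates
`w` new vertices and removes `u` legal moves, then the two moves of a round lower the potential by
at least `(w + 1) * a + (u + 1) * b`, because Staller's reply lowers both counts by at least one;
when this amount is at least `2`, the potential bounds the length of the game.

The pair `(a, b)` changes with the maximum number `k` of vertices that a move can newly dominate.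
If closed neighborhoods have at least `d` vertices, double counting the pairs of an undominated
vertex and a move that dominates it gives `d * (undominated vertices) ≤ k * (legal moves)`, so that
a bound with weights `(a, b)` implies the one with weights `(a - c * d, b + c * k)` for `c ≥ 0`.
With these weights adjusted so that a round costs at least `2`, the bound extends to positions with
larger gains. Always `u ≥ 1`, and when the maximum gain is exactly two, some gain-two move also
makes a second vertex useless, so that `u ≥ 2`.
-/

section DominationGame

open Finset

variable [Fintype V] {H : Finset (Finset V)} {S T : Finset V} {u v x : V}

lemma mem_closedNbhd : u ∈ closedNbhd H v ↔ u = v ∨ ∃ e ∈ H, u ∈ e ∧ v ∈ e := by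
  simp [closedNbhd]

lemma self_mem_closedNbhd : v ∈ closedNbhd H v :=
  mem_closedNbhd.2 (.inl rfl)

lemma mem_closedNbhd_comm : u ∈ closedNbhd H v ↔ v ∈ closedNbhd H u := by
  simp only [mem_closedNbhd, eq_comm (a := u), and_comm (a := u ∈ _)]

lemma card_le_card_closedNbhd {e : Finset V} (he : e ∈ H) (hv : v ∈ e) :
    #e ≤ #(closedNbhd H v) :=
  card_le_card fun _ hu => mem_closedNbhd.2 (.inr ⟨e, he, hu, hv⟩)

/-- The legal moves at the position with set `S` of dominated vertices. -/
noncomputable def legalMoves (H : Finset (Finset V)) (S : Finset V) : Finset V :=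
  univ.filter fun v => ¬ closedNbhd H v ⊆ S

lemma mem_legalMoves : v ∈ legalMoves H S ↔ ¬ closedNbhd H v ⊆ S := by
  simp [legalMoves]

lemma mem_legalMoves_of_notMem (hv : v ∉ S) : v ∈ legalMoves H S :=
  mem_legalMoves.2 fun h => hv (h self_mem_closedNbhd)

lemma mem_legalMoves_iff_card_pos : v ∈ legalMoves H S ↔ 0 < #(closedNbhd H v \ S) := by
  rw [mem_legalMoves, card_pos, sdiff_nonempty]

lemma legalMoves_anti (hST : S ⊆ T) : legalMoves H T ⊆ legalMoves H S :=
  fun _ hv => mem_legalMoves.2 fun h => mem_legalMoves.1 hv (h.trans hST)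

lemma legalMoves_empty : legalMoves H ∅ = univ :=
  eq_univ_of_forall fun _ => mem_legalMoves_of_notMem (notMem_empty _)

lemma card_legalMoves_add_card_le {R : Finset V} (hST : S ⊆ T) (hR : R ⊆ legalMoves H S)
    (hdisj : Disjoint (legalMoves H T) R) : #(legalMoves H T) + #R ≤ #(legalMoves H S) := by
  rw [← card_union_of_disjoint hdisj]
  exact card_le_card (union_subset (legalMoves_anti hST) hR)

lemma notMem_legalMoves_union (hx : closedNbhd H x ⊆ S ∪ closedNbhd H v) :
    x ∉ legalMoves H (S ∪ closedNbhd H v) :=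
  fun h => mem_legalMoves.1 h hx

lemma card_legalMoves_union_lt (hv : v ∈ legalMoves H S) :
    #(legalMoves H (S ∪ closedNbhd H v)) < #(legalMoves H S) := by
  have := card_legalMoves_add_card_le (R := {v}) subset_union_left (singleton_subset_iff.2 hv)
    (disjoint_singleton_right.2 (notMem_legalMoves_union subset_union_right))
  rwa [card_singleton] at this

lemma card_legalMoves_union_add_one_lt (hv : v ∈ legalMoves H S) (hx : x ∈ legalMoves H S)
    (hvx : v ≠ x) (hsub : closedNbhd H x ⊆ S ∪ closedNbhd H v) :
    #(legalMoves H (S ∪ closedNbhd H v)) + 1 < #(legalMoves H S) := by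
  have := card_legalMoves_add_card_le (R := {v, x}) subset_union_left
    (insert_subset hv (singleton_subset_iff.2 hx))
    (disjoint_insert_right.2 ⟨notMem_legalMoves_union subset_union_right,
      disjoint_singleton_right.2 (notMem_legalMoves_union hsub)⟩)
  rwa [card_pair hvx] at this

lemma card_compl_union_add_card_sdiff : #(S ∪ T)ᶜ + #(T \ S) = #Sᶜ := by
  rw [compl_union, ← sdiff_eq_inter_compl, sdiff_eq_inter_compl T S, inter_comm T,
    card_sdiff_add_card_inter]

lemma domGameVal_eq_zero {dom : Bool} (h : legalMoves H S = ∅) : domGameVal H dom S = 0 := by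
  rw [domGameVal, dif_neg]
  exact not_nonempty_iff_eq_empty.2 h

lemma domGameVal_true_le (hv : v ∈ legalMoves H S) :
    domGameVal H true S ≤ 1 + domGameVal H false (S ∪ closedNbhd H v) := by
  rw [domGameVal, dif_pos ⟨v, hv⟩, if_pos rfl]
  exact Nat.add_le_add_left (inf'_le _ (mem_attach _ ⟨v, hv⟩)) 1

lemma domGameVal_false_le {c : ℝ} (hc : 0 ≤ c)
    (h : ∀ v ∈ legalMoves H S, 1 + (domGameVal H true (S ∪ closedNbhd H v) : ℝ) ≤ c) :
    (domGameVal H false S : ℝ) ≤ c := by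
  rw [domGameVal]
  simp only [Bool.false_eq_true, if_false]
  split_ifs with hne
  · obtain ⟨⟨v, hv⟩, -, hmax⟩ := exists_mem_eq_sup' (attach_nonempty_iff.2 hne)
      fun v => domGameVal H true (S ∪ closedNbhd H v.1)
    rw [hmax]
    exact mod_cast h v hv
  · exact mod_cast hc

/-- The weighted count of undominated vertices and legal moves that bounds the number of remaining
moves. -/
noncomputable def potential (H : Finset (Finset V)) (a b : ℝ) (S : Finset V) : ℝ :=
  a * #Sᶜ + b * #(legalMoves H S)

variable {a b : ℝ}

lemma potential_nonneg (ha : 0 ≤ a) (hb : 0 ≤ b) : 0 ≤ potential H a b S := by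
  unfold potential
  positivity

lemma potential_empty : potential H a b ∅ = (a + b) * Fintype.card V := by
  rw [potential, compl_empty, legalMoves_empty, card_univ, add_mul]

lemma potential_union_add_le (ha : 0 ≤ a) (hb : 0 ≤ b) {w r : ℕ} (hw : w < #(closedNbhd H v \ S))
    (hr : #(legalMoves H (S ∪ closedNbhd H v)) + r < #(legalMoves H S)) :
    potential H a b (S ∪ closedNbhd H v) + ((w + 1) * a + (r + 1) * b) ≤ potential H a b S := by
  have hcompl : #(S ∪ closedNbhd H v)ᶜ + (w + 1) ≤ #Sᶜ := by
    rw [← card_compl_union_add_card_sdiff (S := S) (T := closedNbhd H v)]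
    lia
  calc potential H a b (S ∪ closedNbhd H v) + ((w + 1) * a + (r + 1) * b)
      = a * (#(S ∪ closedNbhd H v)ᶜ + (w + 1) : ℕ)
          + b * (#(legalMoves H (S ∪ closedNbhd H v)) + r + 1 : ℕ) := by
        push_cast [potential]
        ring
    _ ≤ potential H a b S := by
        unfold potential
        gcongr
        exact hr

lemma potential_union_add_le_of_mem_legalMoves (ha : 0 ≤ a) (hb : 0 ≤ b)
    (hv : v ∈ legalMoves H S) :
    potential H a b (S ∪ closedNbhd H v) + (a + b) ≤ potential H a b S := by
  simpa using potential_union_add_le ha hb (w := 0) (r := 0) (mem_legalMoves_iff_card_pos.1 hv)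
    (card_legalMoves_union_lt hv)

lemma ssubset_union_closedNbhd (hv : v ∈ legalMoves H S) : S ⊂ S ∪ closedNbhd H v :=
  ssubset_of_subset_not_subset subset_union_left
    fun h => mem_legalMoves.1 hv (subset_union_right.trans h)

lemma domGameVal_le_potential_of_round (ha : 0 ≤ a) (hb : 0 ≤ b) {w r : ℕ}
    (hw : w < #(closedNbhd H v \ S))
    (hr : #(legalMoves H (S ∪ closedNbhd H v)) + r < #(legalMoves H S))
    (hround : 2 ≤ (w + 2) * a + (r + 2) * b)
    (ih : ∀ T, S ⊂ T → (domGameVal H true T : ℝ) ≤ potential H a b T) :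
    (domGameVal H true S : ℝ) ≤ potential H a b S := by
  have hv : v ∈ legalMoves H S := mem_legalMoves_iff_card_pos.2 (by lia)
  have hdom := potential_union_add_le ha hb hw hr
  have hstaller : (domGameVal H false (S ∪ closedNbhd H v) : ℝ) ≤ potential H a b S - 1 := by
    refine domGameVal_false_le ?_ fun x hx => ?_
    · have hone : 1 ≤ (w + 1) * a + (r + 1) * b := by
        linarith [mul_nonneg w.cast_nonneg ha, mul_nonneg r.cast_nonneg hb]
      linarith [potential_nonneg (H := H) (S := S ∪ closedNbhd H v) ha hb]
    · have hreply := potential_union_add_le_of_mem_legalMoves ha hb hx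
      have hrest := ih _ ((ssubset_union_closedNbhd hv).trans (ssubset_union_closedNbhd hx))
      linarith
  have hmove : (domGameVal H true S : ℝ) ≤ 1 + domGameVal H false (S ∪ closedNbhd H v) :=
    mod_cast domGameVal_true_le hv
  linarith

/-- No move at the position `S` dominates more than `k` new vertices. -/
def GainAtMost (H : Finset (Finset V)) (k : ℕ) (S : Finset V) : Prop :=
  ∀ v, #(closedNbhd H v \ S) ≤ k

lemma GainAtMost.mono {k : ℕ} (h : GainAtMost H k S) (hST : S ⊆ T) : GainAtMost H k T :=
  fun v => (card_le_card (sdiff_subset_sdiff Subset.rfl hST)).trans (h v)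

lemma gainAtMost_card : GainAtMost H (Fintype.card V) S :=
  fun _ => card_le_univ _

lemma not_gainAtMost {k : ℕ} : ¬ GainAtMost H k S ↔ ∃ v, k < #(closedNbhd H v \ S) := by
  simp only [GainAtMost, not_forall, not_le]

lemma GainAtMost.legalMoves_eq_empty (h : GainAtMost H 0 S) : legalMoves H S = ∅ :=
  eq_empty_of_forall_notMem fun v hv => (mem_legalMoves_iff_card_pos.1 hv).not_ge (h v)

lemma GainAtMost.card_compl_mul_le {d k : ℕ} (hd : ∀ v, d ≤ #(closedNbhd H v))
    (h : GainAtMost H k S) : #Sᶜ * d ≤ #(legalMoves H S) * k := by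
  refine card_mul_le_card_mul (fun x v => x ∈ closedNbhd H v) (fun x hx => ?_) fun v _ => ?_
  · refine (hd x).trans (card_le_card fun v hv => ?_)
    have hxv := mem_closedNbhd_comm.1 hv
    exact mem_filter.2 ⟨mem_legalMoves.2 fun hsub => mem_compl.1 hx (hsub hxv), hxv⟩
  · refine (card_le_card fun x hx => ?_).trans (h v)
    have ⟨hxS, hxv⟩ := mem_filter.1 hx
    exact mem_sdiff.2 ⟨hxv, mem_compl.1 hxS⟩

lemma GainAtMost.closedNbhd_sdiff_eq_pair (h : GainAtMost H 2 S) (hv : v ∉ S) (hx : x ∉ S)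
    (hvx : v ≠ x) (hadj : x ∈ closedNbhd H v) : closedNbhd H v \ S = {v, x} := by
  refine (eq_of_subset_of_card_le ?_ ((h v).trans (card_pair hvx).ge)).symm
  exact insert_subset (mem_sdiff.2 ⟨self_mem_closedNbhd, hv⟩)
    (singleton_subset_iff.2 (mem_sdiff.2 ⟨hadj, hx⟩))

/-- The second vertex `x` made useless is an undominated neighbor of `v`: if `v` is undominated,
then `v` and `x` have the same undominated neighbors; if no undominated vertex has gain two, then
`x` is its own only undominated neighbor. -/
lemma GainAtMost.exists_card_legalMoves_union_add_one_lt (h2 : GainAtMost H 2 S)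
    (h1 : ¬ GainAtMost H 1 S) :
    ∃ v, 1 < #(closedNbhd H v \ S) ∧
      #(legalMoves H (S ∪ closedNbhd H v)) + 1 < #(legalMoves H S) := by
  obtain ⟨v, hv, hcase⟩ : ∃ v, 1 < #(closedNbhd H v \ S) ∧
      (v ∉ S ∨ ∀ x ∉ S, #(closedNbhd H x \ S) ≤ 1) := by
    by_cases hex : ∃ v, v ∉ S ∧ 1 < #(closedNbhd H v \ S)
    · obtain ⟨v, hvS, hv⟩ := hex
      exact ⟨v, hv, .inl hvS⟩
    · obtain ⟨v, hv⟩ := not_gainAtMost.1 h1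
      exact ⟨v, hv, .inr fun x hx => not_lt.1 fun hlt => hex ⟨x, hx, hlt⟩⟩
  obtain ⟨x, hx, hxv⟩ := exists_mem_ne hv v
  obtain ⟨hadj, hxS⟩ := mem_sdiff.1 hx
  refine ⟨v, hv, card_legalMoves_union_add_one_lt (mem_legalMoves_iff_card_pos.2 (by lia))
    (mem_legalMoves_of_notMem hxS) hxv.symm (sdiff_le_iff.1 ?_)⟩
  rcases hcase with hvS | hone
  · rw [h2.closedNbhd_sdiff_eq_pair hxS hvS hxv (mem_closedNbhd_comm.1 hadj)]
    exact insert_subset hadj (singleton_subset_iff.2 self_mem_closedNbhd)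
  · intro y hy
    rwa [card_le_one.1 (hone x hxS) y hy x (mem_sdiff.2 ⟨self_mem_closedNbhd, hxS⟩)]

/-- When no move gains more than `k`, the potential with weights `a` and `b` bounds the length of
the game with Dominator to move. -/
def PotentialBound (H : Finset (Finset V)) (k : ℕ) (a b : ℝ) : Prop :=
  ∀ S, GainAtMost H k S → (domGameVal H true S : ℝ) ≤ potential H a b S

namespace PotentialBound

variable {d k m r : ℕ} {c : ℝ}

lemma zero (ha : 0 ≤ a) (hb : 0 ≤ b) : PotentialBound H 0 a b := by
  intro S hS
  rw [domGameVal_eq_zero hS.legalMoves_eq_empty, Nat.cast_zero]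
  exact potential_nonneg ha hb

lemma trade (h : PotentialBound H k a b) (hd : ∀ v, d ≤ #(closedNbhd H v)) (hc : 0 ≤ c) :
    PotentialBound H k (a - c * d) (b + c * k) := by
  intro S hS
  have hcount : (#Sᶜ * d : ℝ) ≤ #(legalMoves H S) * k := mod_cast hS.card_compl_mul_le hd
  calc (domGameVal H true S : ℝ) ≤ potential H a b S := h S hS
    _ ≤ potential H a b S + c * (#(legalMoves H S) * k - #Sᶜ * d) :=
        le_add_of_nonneg_right (mul_nonneg hc (sub_nonneg.2 hcount))
    _ = potential H (a - c * d) (b + c * k) S := by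
        unfold potential
        ring

lemma extend_of_forall_exists (h : PotentialBound H k a b) (ha : 0 ≤ a) (hb : 0 ≤ b)
    (hround : 2 ≤ (k + 2) * a + (r + 2) * b)
    (hmove : ∀ S, GainAtMost H m S → ¬ GainAtMost H k S → ∃ v, k < #(closedNbhd H v \ S) ∧
      #(legalMoves H (S ∪ closedNbhd H v)) + r < #(legalMoves H S)) :
    PotentialBound H m a b := by
  intro S
  induction S using WellFoundedGT.induction with
  | ind S ih =>
    intro hS
    by_cases hk : GainAtMost H k S
    · exact h S hk
    · obtain ⟨v, hgain, hlegal⟩ := hmove S hS hk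
      exact domGameVal_le_potential_of_round ha hb hgain hlegal hround
        fun T hST => ih T hST (hS.mono hST.subset)

lemma extend (h : PotentialBound H k a b) (ha : 0 ≤ a) (hb : 0 ≤ b)
    (hround : 2 ≤ (k + 2) * a + 2 * b) : PotentialBound H m a b := by
  refine h.extend_of_forall_exists (r := 0) ha hb (by simpa using hround) fun S _ hk => ?_
  obtain ⟨v, hv⟩ := not_gainAtMost.1 hk
  exact ⟨v, hv, card_legalMoves_union_lt (mem_legalMoves_iff_card_pos.2 (by lia))⟩

lemma extend_one_two (h : PotentialBound H 1 a b) (ha : 0 ≤ a) (hb : 0 ≤ b)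
    (hround : 2 ≤ 3 * a + 3 * b) : PotentialBound H 2 a b :=
  h.extend_of_forall_exists (r := 1) ha hb (by push_cast; linarith)
    fun _ => GainAtMost.exists_card_legalMoves_union_add_one_lt

lemma gammaGame_le (h : PotentialBound H (Fintype.card V) a b) :
    (gammaGame H : ℝ) ≤ (a + b) * Fintype.card V :=
  (h ∅ gainAtMost_card).trans_eq potential_empty

end PotentialBound

end DominationGame

theorem stmt_16_general (V : Type) [Fintype V] (H : Finset (Finset V))
    (hcard : ∀ v, 5 ≤ (closedNbhd H v).card) :
    (gammaGame H : ℝ) ≤ 5153 / 10032 * Fintype.card V := by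
  -- Every traded amount `c` is the one for which a round then costs exactly `2`.
  have h₁ : PotentialBound H 1 1 0 :=
    (PotentialBound.zero zero_le_one le_rfl).extend zero_le_one le_rfl (by norm_num)
  have h₂ : PotentialBound H 2 (7 / 12) (1 / 12) := by
    have htrade : PotentialBound H 1 (7 / 12) (1 / 12) := by
      convert h₁.trade (c := 1 / 12) hcard (by norm_num) using 1 <;> norm_num
    exact htrade.extend_one_two (by norm_num) (by norm_num) (by norm_num)
  have h₃ : PotentialBound H 3 (41 / 96) (7 / 48) := by
    have htrade : PotentialBound H 2 (41 / 96) (7 / 48) := by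
      convert h₂.trade (c := 1 / 32) hcard (by norm_num) using 1 <;> norm_num
    exact htrade.extend (by norm_num) (by norm_num) (by norm_num)
  have h₄ : PotentialBound H 4 (287 / 912) (389 / 1824) := by
    have htrade : PotentialBound H 3 (287 / 912) (389 / 1824) := by
      convert h₃.trade (c := 41 / 1824) hcard (by norm_num) using 1 <;> norm_num
    exact htrade.extend (by norm_num) (by norm_num) (by norm_num)
  have h₅ : PotentialBound H (Fintype.card V) (4879 / 20064) (1809 / 6688) := by
    have htrade : PotentialBound H 4 (4879 / 20064) (1809 / 6688) := by
      convert h₄.trade (c := 287 / 20064) hcard (by norm_num) using 1 <;> norm_num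
    exact htrade.extend (by norm_num) (by norm_num) (by norm_num)
  exact h₅.gammaGame_le.trans_eq (by norm_num)

/-- if `H` is a 5-uniform hypergraph on `n` vertices with no isolated
vertices, then `γ_g(H) ≤ (37/72) n`. -/
theorem stmt_16 (V : Type) [Fintype V] (H : Finset (Finset V))
    (huniform : ∀ e ∈ H, e.card = 5)
    (hisol : ∀ v : V, ∃ u : V, u ≠ v ∧ ∃ e ∈ H, u ∈ e ∧ v ∈ e) :
    (gammaGame H : ℝ) ≤ 37 / 72 * Fintype.card V := by
  have hcard (v : V) : 5 ≤ (closedNbhd H v).card :=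
    have ⟨_, _, e, he, _, hv⟩ := hisol v
    huniform e he ▸ card_le_card_closedNbhd he hv
  exact (stmt_16_general V H hcard).trans
    (mul_le_mul_of_nonneg_right (by norm_num) (Nat.cast_nonneg _))
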